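/- Let k ≥ 2 and t ≥ 2 be integers and let G be a fixed edge-critical graph with chromatic number χ(G) = k + 1. Then there exists n₀ such that for all integers n ≥ n₀, the star-critical Ramsey number satisfies r₊(G, K₁ + nK_t) = (k−1)·n·t + t. -/

import Mathlib

open SimpleGraph

/-- `containsCopy F G` : the graph `F` contains a copy of the graph `G` (as a subgraph). -/
def containsCopy {V W : Type*} (F : SimpleGraph V) (G : SimpleGraph W) : Prop :=
  ∃ f : G →g F, Function.Injective f

/-- `arrows N G H` : every red/blue coloring of the edges of `K_N` (given by the graph `R` of
red edges, whose complement is the graph of blue edges) contains a red copy of `G` or a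
blue copy of `H`. -/
def arrows {V W : Type*} (N : ℕ) (G : SimpleGraph V) (H : SimpleGraph W) : Prop :=
  ∀ R : SimpleGraph (Fin N), containsCopy R G ∨ containsCopy Rᶜ H

/-- The Ramsey number `R(G, H)`. -/
noncomputable def ramseyNumber {V W : Type*} (G : SimpleGraph V) (H : SimpleGraph W) : ℕ :=
  sInf { N : ℕ | 0 < N ∧ arrows N G H }

/-- The generalized fan `K₁ + nK_t` : the join of a single vertex (`none`) with `n` disjoint
copies of `K_t`. -/
def genFan (n t : ℕ) : SimpleGraph (Option (Fin n × Fin t)) :=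
  SimpleGraph.fromRel (fun a b =>
    a = none ∨ ∃ p q : Fin n × Fin t, a = some p ∧ b = some q ∧ p.1 = q.1)

/-- A graph `G` is edge-critical if it has an edge `e` with `χ(G - e) = χ(G) - 1`. -/
def EdgeCritical {V : Type*} (G : SimpleGraph V) : Prop :=
  ∃ u v : V, G.Adj u v ∧ (G.deleteEdges {s(u, v)}).chromaticNumber + 1 = G.chromaticNumber

/-- `K_m ⊔ K_{1,ℓ}` : the complete graph on the `m` vertices `some i`, together with one new
vertex `none` joined to exactly the `ℓ` vertices `some i` with `i < ℓ` (for `ℓ ≤ m`). -/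
def KstarK (m ℓ : ℕ) : SimpleGraph (Option (Fin m)) :=
  SimpleGraph.fromRel (fun a b =>
    ((∃ i : Fin m, a = some i) ∧ ∃ j : Fin m, b = some j) ∨
      (a = none ∧ ∃ j : Fin m, b = some j ∧ (j : ℕ) < ℓ))

/-- `starArrows m ℓ G H` : every red/blue coloring of the edges of `K_m ⊔ K_{1,ℓ}` (the red
edges forming a subgraph `R`, the blue edges the remaining edges) contains a red copy of `G`
or a blue copy of `H`. -/
def starArrows {V W : Type*} (m ℓ : ℕ) (G : SimpleGraph V) (H : SimpleGraph W) : Prop :=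
  ∀ R : SimpleGraph (Option (Fin m)), R ≤ KstarK m ℓ →
    containsCopy R G ∨ containsCopy (KstarK m ℓ \ R) H

/-- The star-critical Ramsey number `r₊(G, H)`. -/
noncomputable def starRamsey {V W : Type*} (G : SimpleGraph V) (H : SimpleGraph W) : ℕ :=
  sInf { ℓ : ℕ | starArrows (ramseyNumber G H - 1) ℓ G H }

/-- The chromatic number of `G` as a natural number. -/
noncomputable def chromNum {V : Type*} (G : SimpleGraph V) : ℕ := G.chromaticNumber.toNat

/-- `s(G)` : the minimum size of a color class over all proper `χ(G)`-colorings of `G`. -/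
noncomputable def minClassSize {V : Type*} (G : SimpleGraph V) : ℕ :=
  sInf { m : ℕ | ∃ C : G.Coloring (Fin (chromNum G)), ∃ i : Fin (chromNum G),
    m = {v | C v = i}.ncard }

/-- `τ(G)` : the minimum, over all proper `χ(G)`-colorings of `G` having a color class `U_j`
of size `s(G)`, over all vertices `v ∈ U_j` and all other color classes `U_i`, of the number
of neighbors of `v` in `U_i`. -/
noncomputable def tauNum {V : Type*} (G : SimpleGraph V) : ℕ :=
  sInf { m : ℕ | ∃ C : G.Coloring (Fin (chromNum G)), ∃ j : Fin (chromNum G),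
    {v | C v = j}.ncard = minClassSize G ∧
    ∃ v, C v = j ∧ ∃ i : Fin (chromNum G), i ≠ j ∧ m = {u | C u = i ∧ G.Adj v u}.ncard }

/-!
Write `s = n * t`. For the lower bound, split `K_{ks}` into `k` blue cliques of order `s` with red
edges between them: a blue clique is too small for a fan, and a new vertex of blue degree less than
`t` cannot belong to a fan.

For the upper bound, suppose that there is neither a red `G` nor a blue fan. A red-`G`-free set
can be tiled by blue `t`-cliques up to a bounded remainder (Ramsey), so blue degrees in `K_{ks}`
are at most `s + C`. Hence the red graph is dense enough to contain a large complete `k`-partite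
graph (Erdős–Stone). As `G` is edge-critical, one red edge inside a class of a nearly complete
`k`-partite red graph creates a red `G`; this forces almost all vertices, and then all of them,
into `k` red-independent classes. A blue clique has at most `s` vertices, so each class is a blue
clique of order exactly `s`. The new vertex has fewer than `t` blue neighbors in each class and is
not joined to only `s - t` vertices, so it has a red neighbor in every class and many of them in
every class but one, which again creates a red `G`.
-/

section Auxiliary

open Finset

variable {V W α β ι : Type*}

lemma containsCopy_iff_isContained {F : SimpleGraph V} {G : SimpleGraph W} :
    containsCopy F G ↔ G ⊑ F :=
  ⟨fun ⟨f, hf⟩ ↦ ⟨⟨f, hf⟩⟩, fun ⟨f⟩ ↦ ⟨f.toHom, f.injective⟩⟩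

/-! ### Ramsey's theorem and clique tilings -/

open scoped Classical in
lemma exists_isNClique_or_compl_isNClique (R : SimpleGraph α) (a b : ℕ) (S : Finset α)
    (hS : (a + b).choose a ≤ #S) :
    ∃ T ⊆ S, R.IsNClique a T ∨ Rᶜ.IsNClique b T := by
  induction a generalizing b S with
  | zero => exact ⟨∅, empty_subset S, .inl <| isNClique_empty.mpr rfl⟩
  | succ a iha =>
    induction b generalizing S with
    | zero => exact ⟨∅, empty_subset S, .inr <| isNClique_empty.mpr rfl⟩
    | succ b ihb =>
      have hchoose : (a + 1 + (b + 1)).choose (a + 1) =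
          (a + (b + 1)).choose a + (a + 1 + b).choose (a + 1) := by
        rw [show a + 1 + (b + 1) = a + b + 1 + 1 by ring, Nat.choose_succ_succ,
          show a + (b + 1) = a + b + 1 by ring, show a + 1 + b = a + b + 1 by ring]
      have hpos : 0 < (a + (b + 1)).choose a := Nat.choose_pos (Nat.le_add_right _ _)
      obtain ⟨x, hx⟩ : S.Nonempty := card_pos.mp (by lia)
      have hsplit : #S ≤ #{y ∈ S | R.Adj x y} + #{y ∈ S | Rᶜ.Adj x y} + 1 := by
        have hcover : S.erase x ⊆ {y ∈ S | R.Adj x y} ∪ {y ∈ S | Rᶜ.Adj x y} := by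
          intro y hy
          simp only [mem_erase, mem_union, mem_filter, compl_adj] at hy ⊢
          tauto
        have := (card_le_card hcover).trans (card_union_le _ _)
        rw [card_erase_of_mem hx] at this
        lia
      have hinsert {Q : SimpleGraph α} {n : ℕ} {T : Finset α}
          (hT : ∀ y ∈ T, y ∈ S ∧ Q.Adj x y) (hQ : Q.IsNClique n T) :
          insert x T ⊆ S ∧ Q.IsNClique (n + 1) (insert x T) :=
        ⟨insert_subset hx fun y hy ↦ (hT y hy).1, hQ.insert fun y hy ↦ (hT y hy).2⟩
      rcases le_or_gt ((a + (b + 1)).choose a) #{y ∈ S | R.Adj x y} with hred | hred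
      · obtain ⟨T, hT, hclique | hclique⟩ := iha (b + 1) _ hred
        · have := hinsert (fun y hy ↦ mem_filter.mp (hT hy)) hclique
          exact ⟨insert x T, this.1, .inl this.2⟩
        · exact ⟨T, hT.trans (filter_subset _ _), .inr hclique⟩
      · obtain ⟨T, hT, hclique | hclique⟩ := ihb {y ∈ S | Rᶜ.Adj x y} (by lia)
        · exact ⟨T, hT.trans (filter_subset _ _), .inl hclique⟩
        · have := hinsert (fun y hy ↦ mem_filter.mp (hT hy)) hclique
          exact ⟨insert x T, this.1, .inr this.2⟩

/-- `S` contains `n` pairwise disjoint `t`-cliques of `B`: what a vertex adjacent to all of `S`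
needs to be the center of a copy of `K₁ + nK_t`. -/
def ContainsDisjointCliques (B : SimpleGraph α) (n t : ℕ) (S : Finset α) : Prop :=
  ∃ T : Fin n → Finset α, Pairwise (Function.onFun Disjoint T) ∧
    ∀ i, T i ⊆ S ∧ B.IsNClique t (T i)

namespace ContainsDisjointCliques

variable {B : SimpleGraph α} {n t : ℕ} {S : Finset α}

open scoped Classical in
lemma succ {T : Finset α} (hTS : T ⊆ S) (hT : B.IsNClique t T)
    (h : ContainsDisjointCliques B n t (S \ T)) : ContainsDisjointCliques B (n + 1) t S := by
  obtain ⟨U, hdisj, hU⟩ := h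
  have hTU (i) : Disjoint T (U i) := disjoint_sdiff.mono_right (hU i).1
  refine ⟨Fin.cons T U, fun i j hij ↦ ?_, Fin.cases ⟨hTS, hT⟩ fun i ↦ ?_⟩
  · cases i using Fin.cases <;> cases j using Fin.cases
    · exact absurd rfl hij
    · exact hTU _
    · exact (hTU _).symm
    · exact hdisj fun h ↦ hij (congrArg Fin.succ h)
  · exact ⟨(hU i).1.trans sdiff_subset, (hU i).2⟩

open scoped Classical in
lemma of_forall_exists_isNClique {C : ℕ}
    (hC : ∀ T ⊆ S, C ≤ #T → ∃ U ⊆ T, B.IsNClique t U) (hS : n * t + C ≤ #S + t) :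
    ContainsDisjointCliques B n t S := by
  induction n generalizing S with
  | zero => exact ⟨Fin.elim0, fun i ↦ i.elim0, fun i ↦ i.elim0⟩
  | succ n ih =>
    rw [Nat.succ_mul] at hS
    obtain ⟨T, hTS, hT⟩ := hC S subset_rfl (by lia)
    refine succ hTS hT (ih (fun U hU ↦ hC U (hU.trans sdiff_subset)) ?_)
    have := card_sdiff_add_card_eq_card hTS
    rw [hT.card_eq] at this
    lia

lemma of_isClique (hS : B.IsClique S) (hcard : n * t ≤ #S) : ContainsDisjointCliques B n t S := by
  refine of_forall_exists_isNClique (C := t) (fun T hTS hT ↦ ?_) (by lia)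
  obtain ⟨U, hUT, hU⟩ := exists_subset_card_eq hT
  exact ⟨U, hUT, hS.subset (coe_subset.mpr (hUT.trans hTS)), hU⟩

end ContainsDisjointCliques

/-! ### Generalized fans -/

lemma genFan_adj_none_some {n t : ℕ} (p : Fin n × Fin t) : (genFan n t).Adj none (some p) := by
  simp [genFan]

lemma genFan_adj_some_some {n t : ℕ} {p q : Fin n × Fin t} :
    (genFan n t).Adj (some p) (some q) ↔ p ≠ q ∧ p.1 = q.1 := by
  simp only [genFan, fromRel_adj, ne_eq, Option.some.injEq]
  grind

lemma le_degree_genFan {n t : ℕ} (hn : 0 < n) (p : Option (Fin n × Fin t))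
    [Fintype ((genFan n t).neighborSet p)] : t ≤ (genFan n t).degree p := by
  suffices ∃ φ : Fin t → (genFan n t).neighborSet p, Function.Injective φ by
    obtain ⟨φ, hφ⟩ := this
    rw [← card_neighborSet_eq_degree]
    exact (Fintype.card_fin t).symm.trans_le (Fintype.card_le_of_injective φ hφ)
  rcases p with _ | ⟨i, a⟩
  · refine ⟨fun b ↦ ⟨some (⟨0, hn⟩, b), genFan_adj_none_some _⟩, fun b b' h ↦ ?_⟩
    simpa using congrArg Subtype.val h
  · refine ⟨fun b ↦ ⟨if b = a then none else some (i, b), ?_⟩, fun b b' h ↦ ?_⟩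
    · split_ifs with hb
      · exact (genFan_adj_none_some _).symm
      · exact genFan_adj_some_some.mpr ⟨by simpa using Ne.symm hb, rfl⟩
    · simp only [Subtype.mk.injEq] at h
      grind

lemma ContainsDisjointCliques.genFan_isContained {B : SimpleGraph α} {n t : ℕ} {S : Finset α}
    {z : α} (h : ContainsDisjointCliques B n t S) (hz : ∀ a ∈ S, B.Adj z a) :
    genFan n t ⊑ B := by
  obtain ⟨T, hdisj, hT⟩ := h
  let e (i : Fin n) : Fin t ≃ T i := ((T i).equivFinOfCardEq (hT i).2.card_eq).symm
  let f (o : Option (Fin n × Fin t)) : α := o.elim z fun p ↦ e p.1 p.2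
  have hzf (p : Fin n × Fin t) : B.Adj z (f (some p)) := hz _ ((hT p.1).1 (e p.1 p.2).2)
  have hf_inj : Function.Injective f := by
    rintro (_ | ⟨i, a⟩) (_ | ⟨j, b⟩) hab
    · rfl
    · exact absurd hab (hzf _).ne
    · exact absurd hab (hzf _).ne'
    · obtain rfl : i = j := by
        by_contra hij
        exact disjoint_left.mp (hdisj hij) (e i a).2 ((congrArg (· ∈ T j) hab).mpr (e j b).2)
      obtain rfl : a = b := (e i).injective (Subtype.ext hab)
      rfl
  refine ⟨⟨⟨f, fun {a b} hab ↦ ?_⟩, hf_inj⟩⟩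
  rcases a with _ | ⟨i, a⟩ <;> rcases b with _ | ⟨j, b⟩
  · exact absurd hab ((genFan n t).irrefl)
  · exact hzf _
  · exact (hzf _).symm
  · obtain ⟨hne, rfl : i = j⟩ := genFan_adj_some_some.mp hab
    exact (hT i).2.isClique (e i a).2 (e i b).2
      (hf_inj.ne (a₁ := some (i, a)) (a₂ := some (i, b)) (by simpa using hne))

open scoped Classical in
lemma genFan_isContained_of_isClique {B : SimpleGraph α} {n t : ℕ} {S : Finset α}
    (hS : B.IsClique S) (hcard : n * t < #S) : genFan n t ⊑ B := by
  obtain ⟨z, hz⟩ : S.Nonempty := card_pos.mp (by lia)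
  have hrest : ContainsDisjointCliques B n t (S.erase z) :=
    .of_isClique (hS.subset (coe_subset.mpr (erase_subset z S)))
      (by rw [card_erase_of_mem hz]; lia)
  exact hrest.genFan_isContained fun a ha ↦ hS hz (mem_of_mem_erase ha) (ne_of_mem_erase ha).symm

-- A neighbor `c` of `v` in `Y` is the center; `v` takes the place of `c` in one of the blocks.
lemma genFan_isContained_of_isClique_of_le_card_neighbors {B : SimpleGraph α} {n t : ℕ}
    {Y : Finset α} {v : α} [DecidablePred (B.Adj v)] (hY : B.IsClique Y) (hcard : n * t ≤ #Y)
    (hv : v ∉ Y) (hn : 0 < n) (ht : 0 < t) (hdeg : t ≤ #{y ∈ Y | B.Adj v y}) : genFan n t ⊑ B := by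
  classical
  obtain ⟨n, rfl⟩ := Nat.exists_eq_add_one.mpr hn
  obtain ⟨t, rfl⟩ := Nat.exists_eq_add_one.mpr ht
  obtain ⟨T, hT, hTcard⟩ := exists_subset_card_eq hdeg
  have hTY : T ⊆ Y := hT.trans (filter_subset _ _)
  have hvT {a} (ha : a ∈ T) : B.Adj v a := (mem_filter.mp (hT ha)).2
  obtain ⟨c, hc⟩ : T.Nonempty := card_pos.mp (by lia)
  have hblock : B.IsNClique (t + 1) (insert v (T.erase c)) :=
    IsNClique.insert ⟨hY.subset (coe_subset.mpr ((erase_subset c T).trans hTY)), by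
      rw [card_erase_of_mem hc]; lia⟩ fun a ha ↦ hvT (mem_of_mem_erase ha)
  have hrest :
      ContainsDisjointCliques B n (t + 1) (insert v (Y.erase c) \ insert v (T.erase c)) := by
    rw [show insert v (Y.erase c) \ insert v (T.erase c) = Y \ T by grind]
    refine .of_isClique (hY.subset (coe_subset.mpr sdiff_subset)) ?_
    have := card_sdiff_add_card_eq_card hTY
    lia
  have hsub : insert v (T.erase c) ⊆ insert v (Y.erase c) :=
    insert_subset_insert v (erase_subset_erase c hTY)
  refine (hrest.succ hsub hblock).genFan_isContained (z := c) fun a ha ↦ ?_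
  rcases mem_insert.mp ha with rfl | ha
  · exact (hvT hc).symm
  · exact hY (hTY hc) (mem_of_mem_erase ha) (ne_of_mem_erase ha).symm

/-! ### Almost complete families of vertex sets -/

open scoped Classical in
/-- The vertices of `X` that are not adjacent to `a`, among them `a` itself if `a ∈ X`. -/
noncomputable def nonNeighbors (R : SimpleGraph α) (X : Finset α) (a : α) : Finset α :=
  {b ∈ X | ¬R.Adj a b}

/-- Each vertex of a set of the family `X` has at most `D` non-neighbors in each other set of the
family. Edges inside the sets are unrestricted. -/
def AlmostComplete (R : SimpleGraph α) (X : ι → Finset α) (D : ℕ) : Prop :=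
  ∀ ⦃i j⦄, i ≠ j → ∀ a ∈ X i, #(nonNeighbors R (X j) a) ≤ D

section AlmostComplete

variable {R : SimpleGraph α} {X Y U : Finset α} {a b : α}

lemma mem_nonNeighbors : b ∈ nonNeighbors R X a ↔ b ∈ X ∧ ¬R.Adj a b := by
  simp only [nonNeighbors, mem_filter]

lemma nonNeighbors_mono (h : X ⊆ Y) (a : α) : nonNeighbors R X a ⊆ nonNeighbors R Y a := by
  classical exact filter_subset_filter _ h

lemma card_nonNeighbors_add_le (hdisj : Disjoint X Y) (hX : X ⊆ U) (hY : Y ⊆ U) (a : α) :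
    #(nonNeighbors R X a) + #(nonNeighbors R Y a) ≤ #(nonNeighbors R U a) := by
  classical
  have hdisj' : Disjoint (nonNeighbors R X a) (nonNeighbors R Y a) :=
    hdisj.mono (filter_subset _ _) (filter_subset _ _)
  rw [← card_union_of_disjoint hdisj']
  exact card_le_card (union_subset (nonNeighbors_mono hX a) (nonNeighbors_mono hY a))

lemma card_nonNeighbors_map (f : β ↪ α) (X : Finset β) (b : β) :
    #(nonNeighbors R (X.map f) (f b)) = #(nonNeighbors (R.comap f) X b) := by
  simp only [nonNeighbors, filter_map, card_map]
  rfl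

lemma nonNeighbors_eq_self (h : ∀ b ∈ X, ¬R.Adj a b) : nonNeighbors R X a = X := by
  ext b
  grind [mem_nonNeighbors]

lemma AlmostComplete.mono {X Y : ι → Finset α} {D : ℕ} (hX : AlmostComplete R X D)
    (h : ∀ i, Y i ⊆ X i) : AlmostComplete R Y D :=
  fun i j hij a ha ↦ (card_le_card (nonNeighbors_mono (h j) a)).trans (hX hij a (h i ha))

lemma AlmostComplete.map {f : β ↪ α} {X : ι → Finset β} {D : ℕ}
    (hX : AlmostComplete (R.comap f) X D) : AlmostComplete R (fun i ↦ (X i).map f) D := by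
  intro i j hij a ha
  obtain ⟨b, hb, rfl⟩ := mem_map.mp ha
  exact (card_nonNeighbors_map f (X j) b).trans_le (hX hij b hb)

lemma AlmostComplete.disjoint {X : ι → Finset α} (hX : AlmostComplete R X 0) :
    Pairwise (Function.onFun Disjoint X) := by
  refine fun i j hij ↦ disjoint_left.mpr fun a hai haj ↦ ?_
  have hempty := card_eq_zero.mp (Nat.le_zero.mp (hX hij a hai))
  exact notMem_empty a (hempty ▸ mem_nonNeighbors.mpr ⟨haj, R.irrefl⟩)

end AlmostComplete

/-! ### Greedy embedding -/

lemma exists_forall_mem_and_pairwise [Fintype V] {A : V → Finset α} {P : V → V → α → α → Prop}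
    {d : ℕ} (hsymm : ∀ v w a b, P v w a b → P w v b a)
    (hP : ∀ v w, v ≠ w → ∀ a ∈ A v, ∃ F : Finset α, #F ≤ d ∧ ∀ b ∈ A w, b ∉ F → P v w a b)
    (hcard : ∀ v, Fintype.card V * d < #(A v)) :
    ∃ f : V → α, (∀ v, f v ∈ A v) ∧ ∀ v w, v ≠ w → P v w (f v) (f w) := by
  classical
  choose! F hFcard hF using hP
  suffices ∀ S : Finset V, ∃ f : V → α, (∀ v, f v ∈ A v) ∧
      ∀ v ∈ S, ∀ w ∈ S, v ≠ w → P v w (f v) (f w) by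
    obtain ⟨f, hfA, hfP⟩ := this univ
    exact ⟨f, hfA, fun v w ↦ hfP v (mem_univ v) w (mem_univ w)⟩
  intro S
  induction S using Finset.induction_on with
  | empty =>
    choose f hf using fun v ↦ card_pos.mp ((Nat.zero_le _).trans_lt (hcard v))
    exact ⟨f, hf, by simp⟩
  | insert v S hv ih =>
    obtain ⟨f, hfA, hfP⟩ := ih
    have hforbidden : #(S.biUnion fun w ↦ F w v (f w)) < #(A v) := by
      refine (card_biUnion_le_card_mul S _ d fun w hw ↦ ?_).trans_lt
        ((Nat.mul_le_mul_right d (card_le_univ S)).trans_lt (hcard v))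
      exact hFcard w v (ne_of_mem_of_not_mem hw hv) _ (hfA w)
    obtain ⟨b, hbA, hb⟩ := exists_mem_notMem_of_card_lt_card hforbidden
    have hbP (w) (hw : w ∈ S) : P w v (f w) b :=
      hF w v (ne_of_mem_of_not_mem hw hv) _ (hfA w) b hbA fun h ↦ hb (mem_biUnion.mpr ⟨w, hw, h⟩)
    refine ⟨Function.update f v b, fun w ↦ ?_, fun w hw w' hw' hne ↦ ?_⟩
    · obtain rfl | hwv := eq_or_ne w v
      · rwa [Function.update_self]
      · rw [Function.update_of_ne hwv]
        exact hfA w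
    · grind

lemma AlmostComplete.exists_copy_of_coloring [Fintype V] {G : SimpleGraph V} {R : SimpleGraph α}
    {X : ι → Finset α} {D : ℕ} (hX : AlmostComplete R X D) (c : G.Coloring ι)
    (hcard : ∀ i, Fintype.card V * (D + 1) < #(X i)) : ∃ f : G.Copy R, ∀ v, f v ∈ X (c v) := by
  classical
  have hforbidden (v w : V) (a) (ha : a ∈ X (c v)) : ∃ F : Finset α, #F ≤ D + 1 ∧
      ∀ b ∈ X (c w), b ∉ F → a ≠ b ∧ (G.Adj v w → R.Adj a b) := by
    by_cases hvw : G.Adj v w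
    · refine ⟨insert a (nonNeighbors R (X (c w)) a), ?_, by grind [mem_nonNeighbors]⟩
      exact (card_insert_le _ _).trans (Nat.succ_le_succ (hX (c.valid hvw) a ha))
    · exact ⟨{a}, by simp, by grind⟩
  obtain ⟨f, hfX, hf⟩ := exists_forall_mem_and_pairwise (A := fun v ↦ X (c v))
    (P := fun v w a b ↦ a ≠ b ∧ (G.Adj v w → R.Adj a b))
    (fun v w a b h ↦ ⟨h.1.symm, fun hvw ↦ (h.2 hvw.symm).symm⟩)
    (fun v w _ ↦ hforbidden v w) (fun v ↦ hcard (c v))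
  exact ⟨⟨⟨f, fun {v w} hvw ↦ (hf v w hvw.ne).2 hvw⟩,
    fun v w hvw ↦ by_contra fun hne ↦ (hf v w hne).1 hvw⟩, hfX⟩

/-! ### Edge-critical graphs -/

/-- `G` has an edge `uv` such that some proper `k`-coloring of `G - uv` gives `u` and `v` the same
color: the form in which edge-criticality of a `(k + 1)`-chromatic graph is used for embeddings. -/
def HasCriticalColoring (G : SimpleGraph V) (k : ℕ) : Prop :=
  ∃ u v, G.Adj u v ∧ ∃ c : (G.deleteEdges {s(u, v)}).Coloring (Fin k), c u = c v

lemma not_colorable_of_chromaticNumber_eq {G : SimpleGraph V} {k : ℕ}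
    (hchi : G.chromaticNumber = (k + 1 : ℕ)) : ¬G.Colorable k := by
  rw [← chromaticNumber_le_iff_colorable, hchi, Nat.cast_le]
  exact Nat.not_succ_le_self k

lemma EdgeCritical.hasCriticalColoring {G : SimpleGraph V} {k : ℕ} (hG : EdgeCritical G)
    (hchi : G.chromaticNumber = (k + 1 : ℕ)) : HasCriticalColoring G k := by
  obtain ⟨u, v, huv, hdel⟩ := hG
  have hcol : (G.deleteEdges {s(u, v)}).Colorable k := by
    rw [← chromaticNumber_le_iff_colorable]
    rw [hchi, Nat.cast_add_one] at hdel
    exact (ENat.add_left_injective_of_ne_top ENat.one_ne_top hdel).le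
  obtain ⟨c⟩ := hcol
  refine ⟨u, v, huv, c, by_contra fun hne ↦ ?_⟩
  refine not_colorable_of_chromaticNumber_eq hchi ⟨c, fun {a b} hab ↦ ?_⟩
  by_cases he : s(a, b) = s(u, v)
  · rcases Sym2.eq_iff.mp he with ⟨rfl, rfl⟩ | ⟨rfl, rfl⟩
    exacts [hne, Ne.symm hne]
  · exact c.valid (deleteEdges_adj.mpr ⟨hab, he⟩)

lemma HasCriticalColoring.pos {G : SimpleGraph V} {k : ℕ} (hG : HasCriticalColoring G k) :
    0 < k := by
  obtain ⟨u, _, _, c, _⟩ := hG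
  exact (c u).pos

lemma HasCriticalColoring.exists_coloring_eq {G : SimpleGraph V} {k : ℕ}
    (hG : HasCriticalColoring G k) (i : Fin k) :
    ∃ u v, G.Adj u v ∧ ∃ c : (G.deleteEdges {s(u, v)}).Coloring (Fin k), c u = i ∧ c v = i := by
  obtain ⟨u, v, huv, c, hc⟩ := hG
  refine ⟨u, v, huv, recolorOfEquiv _ (Equiv.swap (c u) i) c, ?_, ?_⟩
  · exact Equiv.swap_apply_left _ _
  · simp [← hc]

lemma isContained_of_copy_deleteEdges {G : SimpleGraph V} {R : SimpleGraph α} {u v : V}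
    (f : (G.deleteEdges {s(u, v)}).Copy R) {x y : α} (hxy : R.Adj x y)
    (hx : ∀ w, G.Adj u w → w ≠ v → R.Adj x (f w)) (hy : ∀ w, G.Adj v w → w ≠ u → R.Adj y (f w))
    (hf : ∀ w, f w ≠ x ∧ f w ≠ y) : G ⊑ R := by
  classical
  have hf_adj {a b} (hab : G.Adj a b) (hau : a ≠ u) (hav : a ≠ v) : R.Adj (f a) (f b) :=
    f.toHom.map_adj (deleteEdges_adj.mpr ⟨hab, by simp [hau, hav]⟩)
  let g (w : V) : α := if w = u then x else if w = v then y else f w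
  have hg_inj : Function.Injective g := fun a b hab ↦ by
    have hf_inj : f a = f b → a = b := fun h ↦ f.injective h
    grind [hxy.ne]
  refine ⟨⟨⟨g, fun {a b} hab ↦ ?_⟩, hg_inj⟩⟩
  grind [SimpleGraph.adj_comm, hab.ne]

section Embedding

variable [Fintype V] {G : SimpleGraph V} {R : SimpleGraph α} {k D : ℕ} {X : Fin k → Finset α}

lemma HasCriticalColoring.isContained_of_adj (hG : HasCriticalColoring G k)
    (hX : AlmostComplete R X D) {x y : α} (hxy : R.Adj x y) (i : Fin k)
    (hi : Fintype.card V * (D + 1) + 2 < #(X i))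
    (hj : ∀ j ≠ i, Fintype.card V * (D + 1) + #(nonNeighbors R (X j) x) +
      #(nonNeighbors R (X j) y) < #(X j)) : G ⊑ R := by
  classical
  obtain ⟨u, v, -, c, hcu, hcv⟩ := hG.exists_coloring_eq i
  let A (j : Fin k) : Finset α :=
    X j \ if j = i then {x, y} else nonNeighbors R (X j) x ∪ nonNeighbors R (X j) y
  have hA (j) : Fintype.card V * (D + 1) < #(A j) := by
    refine lt_of_lt_of_le ?_ (le_card_sdiff _ _)
    split_ifs with h
    · have := card_le_two (a := x) (b := y)
      subst h
      lia
    · have := card_union_le (nonNeighbors R (X j) x) (nonNeighbors R (X j) y)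
      have := hj j h
      lia
  obtain ⟨f, hf⟩ := (hX.mono fun j ↦ sdiff_subset).exists_copy_of_coloring c hA
  have hf_adj (w) (hw : c w ≠ i) : R.Adj x (f w) ∧ R.Adj y (f w) := by
    have := hf w
    simp only [if_neg hw, mem_sdiff, mem_union, mem_nonNeighbors] at this
    tauto
  have hf_ne (w) : f w ≠ x ∧ f w ≠ y := by
    by_cases hw : c w = i
    · have := hf w
      simp only [if_pos hw, mem_sdiff, mem_insert, mem_singleton] at this
      tauto
    · exact ⟨(hf_adj w hw).1.ne', (hf_adj w hw).2.ne'⟩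
  refine isContained_of_copy_deleteEdges f hxy (fun w huw hwv ↦ ?_) (fun w hvw hwu ↦ ?_) hf_ne
  · have hdel : (G.deleteEdges {s(u, v)}).Adj u w := by grind [deleteEdges_adj]
    exact (hf_adj w (hcu ▸ (c.valid hdel).symm)).1
  · have hdel : (G.deleteEdges {s(u, v)}).Adj v w := by grind [deleteEdges_adj]
    exact (hf_adj w (hcv ▸ (c.valid hdel).symm)).2

lemma AlmostComplete.exists_card_le_add_card_nonNeighbors (hX : AlmostComplete R X D)
    (hG : HasCriticalColoring G k) (hfree : G.Free R)
    (hcard : ∀ i, Fintype.card V * (D + 1) + 2 < #(X i)) (z : α) :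
    ∃ i, #(X i) ≤ Fintype.card V * (D + 1) + D + #(nonNeighbors R (X i) z) := by
  by_contra! hlt
  let i : Fin k := ⟨0, hG.pos⟩
  obtain ⟨y, hy, hyz⟩ := exists_mem_notMem_of_card_lt_card (by grind :
    #(nonNeighbors R (X i) z) < #(X i))
  have hadj : R.Adj z y := by_contra fun h ↦ hyz (mem_nonNeighbors.mpr ⟨hy, h⟩)
  refine hfree (hG.isContained_of_adj hX hadj i (hcard i) fun j hj ↦ ?_)
  have := hX hj.symm y hy
  have := hlt j
  lia

lemma AlmostComplete.exists_forall_not_adj (hX : AlmostComplete R X D)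
    (hG : HasCriticalColoring G k) (hfree : G.Free R)
    (hcard : ∀ i, Fintype.card V * (D + 1) + 2 < #(X i)) {z : α}
    (hz : ∀ i j, i ≠ j → #(nonNeighbors R (X i) z) + #(nonNeighbors R (X j) z) +
      2 * (Fintype.card V * (D + 1) + D) < #(X i) + #(X j)) :
    ∃ i, ∀ a ∈ X i, ¬R.Adj z a := by
  obtain ⟨i, hi⟩ := hX.exists_card_le_add_card_nonNeighbors hG hfree hcard z
  refine ⟨i, fun a ha hza ↦ hfree (hG.isContained_of_adj hX hza i (hcard i) fun j hj ↦ ?_)⟩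
  have := hX hj.symm a ha
  have := hz i j hj.symm
  lia

end Embedding

/-! ### Stability: graphs on `ks` vertices with no `G` and few non-neighbors -/

lemma card_mul_add_card_mul_le [Fintype α] {R : SimpleGraph α} {U B : Finset α} {l q L : ℕ}
    (hl : ∀ x, l ≤ #(nonNeighbors R U x)) (hB : ∀ x ∈ B, l + q ≤ #(nonNeighbors R U x))
    (hL : ∀ a ∈ U, #(nonNeighbors R univ a) ≤ L) :
    Fintype.card α * l + #B * q ≤ #U * L := by
  classical
  calc Fintype.card α * l + #B * q
      = ∑ x, (l + if x ∈ B then q else 0) := by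
        simp [sum_add_distrib]
    _ ≤ ∑ x, #(nonNeighbors R U x) := by
        refine sum_le_sum fun x _ ↦ ?_
        split_ifs with hx
        exacts [hB x hx, hl x]
    _ = ∑ a ∈ U, #{x | ¬R.Adj x a} :=
        sum_card_bipartiteAbove_eq_sum_card_bipartiteBelow fun x a ↦ ¬R.Adj x a
    _ = ∑ a ∈ U, #(nonNeighbors R univ a) := by
        simp only [nonNeighbors, R.adj_comm]
    _ ≤ #U * L := sum_le_card_nsmul U _ L hL

lemma exists_almostComplete_of_completeEquipartiteGraph_isContained {R : SimpleGraph α} {k M : ℕ}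
    (h : completeEquipartiteGraph k M ⊑ R) :
    ∃ A : Fin k → Finset α, AlmostComplete R A 0 ∧ ∀ i, #(A i) = M := by
  classical
  obtain ⟨f⟩ := h
  refine ⟨fun i ↦ univ.map ⟨fun a ↦ f (i, a), fun a b hab ↦ ?_⟩, fun i j hij x hx ↦ ?_, by simp⟩
  · exact congrArg Prod.snd (f.injective hab)
  · obtain ⟨a, -, rfl⟩ := mem_map.mp hx
    rw [Nat.le_zero, card_eq_zero, eq_empty_iff_forall_notMem]
    intro y hy
    obtain ⟨hyA, hnadj⟩ := mem_nonNeighbors.mp hy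
    obtain ⟨b, -, rfl⟩ := mem_map.mp hyA
    exact hnadj (f.toHom.map_adj (completeEquipartiteGraph_adj.mpr hij))

section Stability

variable [Fintype V] {G : SimpleGraph V} [Fintype α] {R : SimpleGraph α} {k s C : ℕ}

/-- The vertices with at most `q` non-neighbors in every set of the family `A` except possibly
`A i`. For a complete multipartite `A` in a `G`-free graph these sets are the large independent
sets of the stability argument. -/
noncomputable def nearClass (R : SimpleGraph α) (A : Fin k → Finset α) (q : ℕ) (i : Fin k) :
    Finset α :=
  open scoped Classical in {x | ∀ j ≠ i, #(nonNeighbors R (A j) x) ≤ q}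

lemma degree_add_card_nonNeighbors [DecidableRel R.Adj] (a : α) :
    R.degree a + #(nonNeighbors R univ a) = Fintype.card α := by
  classical
  rw [← card_neighborFinset_eq_degree, neighborFinset_eq_filter, nonNeighbors, ← card_univ]
  convert card_filter_add_card_filter_not (s := univ) (R.Adj a)

lemma mem_nearClass {A : Fin k → Finset α} {q : ℕ} {i : Fin k} {x : α} :
    x ∈ nearClass R A q i ↔ ∀ j ≠ i, #(nonNeighbors R (A j) x) ≤ q := by
  simp only [nearClass, mem_filter, mem_univ, true_and]

section NearClass

variable {A : Fin k → Finset α} {q : ℕ}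

lemma isIndepSet_nearClass (hG : HasCriticalColoring G k) (hfree : G.Free R)
    (hA : AlmostComplete R A 0) (hcard : ∀ i, Fintype.card V + 2 * q + 2 < #(A i)) (i : Fin k) :
    R.IsIndepSet (nearClass R A q i) := by
  intro x hx y hy _ hxy
  refine hfree (hG.isContained_of_adj hA hxy i (by grind) fun j hj ↦ ?_)
  have hxj := mem_nearClass.mp hx j hj
  have hyj := mem_nearClass.mp hy j hj
  have := hcard j
  lia

lemma disjoint_nearClass (hG : HasCriticalColoring G k) (hfree : G.Free R)
    (hA : AlmostComplete R A 0) (hcard : ∀ i, Fintype.card V + 2 * q + 2 < #(A i)) :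
    Pairwise (Function.onFun Disjoint (nearClass R A q)) := by
  refine fun i j hij ↦ disjoint_left.mpr fun x hxi hxj ↦ ?_
  obtain ⟨l, hl⟩ := hA.exists_card_le_add_card_nonNeighbors hG hfree (by grind) x
  have hlq : #(nonNeighbors R (A l) x) ≤ q := by
    obtain rfl | hli := eq_or_ne l i
    exacts [mem_nearClass.mp hxj l hij, mem_nearClass.mp hxi l hli]
  have := hcard l
  lia

open scoped Classical in
/- Every vertex misses almost a whole class `A i`, and a vertex in no near class misses more than
`q` vertices of another one as well; the degree condition leaves room for few such vertices. -/
lemma card_compl_nearClass_le (hG : HasCriticalColoring G k) (hfree : G.Free R)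
    (hA : AlmostComplete R A 0) (hcard : ∀ i, #(A i) = Fintype.card V + 2 * q + 3)
    (hα : Fintype.card α = k * s) (hdeg : ∀ a, #(nonNeighbors R univ a) ≤ s + C) :
    #(univ \ univ.biUnion (nearClass R A q)) * q ≤
      k * (Fintype.card V * s + (Fintype.card V + 2 * q + 3) * C) := by
  set U := univ.biUnion A
  have hAU (i) : A i ⊆ U := subset_biUnion_of_mem A (mem_univ i)
  have hU : #U ≤ k * (Fintype.card V + 2 * q + 3) := by
    simpa using card_biUnion_le_card_mul univ A _ fun i _ ↦ (hcard i).le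
  have hmiss (x) : ∃ i, 2 * q + 3 ≤ #(nonNeighbors R (A i) x) := by
    obtain ⟨i, hi⟩ := hA.exists_card_le_add_card_nonNeighbors hG hfree (by grind) x
    have := hcard i
    exact ⟨i, by lia⟩
  have hbad (x) (hx : x ∈ univ \ univ.biUnion (nearClass R A q)) :
      2 * q + 3 + q ≤ #(nonNeighbors R U x) := by
    obtain ⟨i, hi⟩ := hmiss x
    have hxi : x ∉ nearClass R A q i := fun h ↦
      (mem_sdiff.mp hx).2 (mem_biUnion.mpr ⟨i, mem_univ i, h⟩)
    simp only [mem_nearClass, not_forall, not_le] at hxi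
    obtain ⟨j, hji, hj⟩ := hxi
    have := card_nonNeighbors_add_le (R := R) (hA.disjoint hji.symm) (hAU i) (hAU j) x
    lia
  have hcount := card_mul_add_card_mul_le (l := 2 * q + 3)
    (fun x ↦ (hmiss x).elim fun i hi ↦ hi.trans (card_le_card (nonNeighbors_mono (hAU i) x)))
    hbad (fun a _ ↦ hdeg a)
  have := Nat.mul_le_mul_right (s + C) hU
  rw [hα] at hcount
  linarith

end NearClass

open scoped Classical in
lemma exists_isIndepSet_family (hG : HasCriticalColoring G k) (hfree : G.Free R) (E : ℕ)
    (hα : Fintype.card α = k * s) (hdeg : ∀ a, #(nonNeighbors R univ a) ≤ s + C)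
    {A : Fin k → Finset α} (hA : AlmostComplete R A 0)
    (hcard : ∀ i, #(A i) = Fintype.card V + 2 * (k * (Fintype.card V + 1) * E) + 3)
    (hs : (Fintype.card V + 2 * (k * (Fintype.card V + 1) * E) + 3) * C ≤ s) :
    ∃ X : Fin k → Finset α, (∀ i, R.IsIndepSet (X i)) ∧ Pairwise (Function.onFun Disjoint X) ∧
      E * #(univ \ univ.biUnion X) ≤ s := by
  set q := k * (Fintype.card V + 1) * E with hq
  have hlarge (i) : Fintype.card V + 2 * q + 2 < #(A i) := by
    rw [hcard i]
    lia
  refine ⟨nearClass R A q, isIndepSet_nearClass hG hfree hA hlarge,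
    disjoint_nearClass hG hfree hA hlarge, ?_⟩
  have hbad := card_compl_nearClass_le hG hfree hA hcard hα hdeg
  set b := #(univ \ univ.biUnion (nearClass R A q))
  have hpos : 0 < k * (Fintype.card V + 1) := Nat.mul_pos hG.pos (Nat.succ_pos _)
  refine Nat.le_of_mul_le_mul_left ?_ hpos
  calc k * (Fintype.card V + 1) * (E * b)
      = b * q := by rw [hq]; ring
    _ ≤ k * (Fintype.card V * s + (Fintype.card V + 2 * q + 3) * C) := hbad
    _ ≤ k * (Fintype.card V * s + s) := by gcongr
    _ = k * (Fintype.card V + 1) * s := by ring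

open scoped Classical in
lemma le_card_add_of_pairwise_disjoint {X : Fin k → Finset α}
    (hdisj : Pairwise (Function.onFun Disjoint X)) (hα : Fintype.card α = k * s)
    (hX : ∀ i, #(X i) ≤ s) (i : Fin k) : s ≤ #(X i) + #(univ \ univ.biUnion X) := by
  have hsum : #(univ \ univ.biUnion X) + ∑ j, #(X j) = k * s := by
    rw [← card_biUnion fun i _ j _ hij ↦ hdisj hij, card_sdiff_add_card_eq_card (subset_univ _),
      card_univ, hα]
  have hrest : ∑ j ∈ univ.erase i, #(X j) ≤ (k - 1) * s := by
    simpa using sum_le_card_nsmul (univ.erase i) _ s fun j _ ↦ hX j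
  rw [← add_sum_erase univ _ (mem_univ i)] at hsum
  have hks : (k - 1) * s + s = k * s := by
    rw [← Nat.succ_mul, Nat.succ_eq_add_one, Nat.sub_add_cancel i.pos]
  lia

lemma colorable_of_isIndepSet_family (hG : HasCriticalColoring G k) (hfree : G.Free R)
    (hdeg : ∀ a, #(nonNeighbors R univ a) ≤ s + C) {X : Fin k → Finset α}
    (hindep : ∀ i, R.IsIndepSet (X i)) (hdisj : Pairwise (Function.onFun Disjoint X)) {b : ℕ}
    (hX : ∀ i, s ≤ #(X i) + b) (hs : (2 * Fintype.card V + 4) * (C + b + 1) ≤ s) :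
    R.Colorable k := by
  have hmiss {i j} (hij : i ≠ j) (x : α) :
      #(nonNeighbors R (X i) x) + #(nonNeighbors R (X j) x) ≤ s + C :=
    (card_nonNeighbors_add_le (hdisj hij) (subset_univ _) (subset_univ _) x).trans (hdeg x)
  have hfew {i j} (hij : i ≠ j) {x} (hx : ∀ a ∈ X i, ¬R.Adj x a) :
      #(nonNeighbors R (X j) x) ≤ C + b := by
    have := hmiss hij x
    rw [nonNeighbors_eq_self hx] at this
    have := hX i
    lia
  have halmost : AlmostComplete R X (C + b) := fun i j hij a ha ↦
    hfew hij fun a' ha' h ↦ hindep i ha ha' h.ne h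
  have hlarge (i) : Fintype.card V * (C + b + 1) + 2 * (C + b + 1) < #(X i) := by
    have := hX i
    nlinarith
  have hclass (z) : ∃ i, ∀ a ∈ X i, ¬R.Adj z a := by
    refine halmost.exists_forall_not_adj hG hfree (fun i ↦ by have := hlarge i; lia) ?_
    intro i j hij
    have := hmiss hij z
    have := hX i
    have := hX j
    nlinarith
  choose c hc using hclass
  refine ⟨c, fun {x y} hxy hcxy ↦ hfree ?_⟩
  refine hG.isContained_of_adj halmost hxy (c x) (by have := hlarge (c x); lia) fun j hj ↦ ?_
  have := hfew hj.symm (hc x)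
  have := hfew (hcxy ▸ hj.symm) (hc y)
  have := hlarge j
  lia

/- Erdős–Stone for `K_k(M)`: the minimum degree `(k-1)s - C` exceeds the Turán density
`1 - 1/(k-1)` of `K_k` times `ks` by a linear amount. -/
lemma exists_completeEquipartiteGraph_isContained (k M C : ℕ) :
    ∃ s₀, ∀ s ≥ s₀, ∀ R : SimpleGraph (Fin (k * s)),
      (∀ a, #(nonNeighbors R univ a) ≤ s + C) → completeEquipartiteGraph k M ⊑ R := by
  classical
  rcases le_or_gt k 1 with hk | hk
  · refine ⟨M, fun s hs R _ ↦ ?_⟩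
    rw [completeEquipartiteGraph_eq_bot_iff.mpr (.inl hk), bot_isContained_iff_card_le]
    simpa using Nat.mul_le_mul_left k hs
  obtain ⟨r, rfl⟩ := Nat.exists_eq_add_one.mpr (Nat.zero_lt_of_lt hk)
  have hr : (0 : ℝ) < r := by exact_mod_cast Nat.lt_of_succ_lt_succ hk
  have hε : (0 : ℝ) < 1 / (2 * r * (r + 1)) := by positivity
  obtain ⟨N, hN⟩ :=
    Filter.eventually_atTop.mp (eventually_completeEquipartiteGraph_isContained_of_minDegree hε r M)
  refine ⟨max N (2 * r * C + 1), fun s hs R hR ↦ hN _ ?_ ?_⟩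
  · exact (le_max_left _ _).trans (hs.trans (Nat.le_mul_of_pos_left s r.succ_pos))
  have hs' : 2 * r * C < s := (le_max_right N _).trans hs
  have hdeg : (r * s - C : ℝ) ≤ R.minDegree := by
    have : NeZero ((r + 1) * s) := ⟨(Nat.mul_pos r.succ_pos (Nat.zero_lt_of_lt hs')).ne'⟩
    obtain ⟨a, ha⟩ := R.exists_minimal_degree_vertex
    have hsum := degree_add_card_nonNeighbors (R := R) a
    have := hR a
    rw [Fintype.card_fin] at hsum
    have := Nat.succ_mul r s
    rw [ha, sub_le_iff_le_add]
    exact_mod_cast (by lia : r * s ≤ R.degree a + C)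
  have hC : (C : ℝ) ≤ s / (2 * r) := by
    rw [le_div_iff₀ (by positivity), mul_comm]
    exact_mod_cast hs'.le
  calc (1 - 1 / (r : ℝ) + 1 / (2 * r * (r + 1))) * ((r + 1) * s : ℕ)
      = r * s - s / (2 * r) := by
        push_cast
        field_simp
        ring
    _ ≤ R.minDegree := by linarith

end Stability

lemma exists_colorable_of_free [Finite V] {G : SimpleGraph V} {k : ℕ}
    (hG : HasCriticalColoring G k) (C : ℕ) :
    ∃ s₀, ∀ s ≥ s₀, ∀ R : SimpleGraph (Fin (k * s)), (∀ a, #(nonNeighbors R univ a) ≤ s + C) →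
      G.Free R → (∀ X : Finset (Fin (k * s)), R.IsIndepSet X → #X ≤ s) → R.Colorable k := by
  classical
  have := Fintype.ofFinite V
  set E := 2 * (2 * Fintype.card V + 4)
  set M := Fintype.card V + 2 * (k * (Fintype.card V + 1) * E) + 3
  obtain ⟨s₁, hs₁⟩ := exists_completeEquipartiteGraph_isContained k M C
  refine ⟨max s₁ (max (M * C) (E * (C + 1))), fun s hs R hdeg hfree hindep ↦ ?_⟩
  obtain ⟨hs₁', hMC, hEC⟩ : s₁ ≤ s ∧ M * C ≤ s ∧ E * (C + 1) ≤ s := by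
    simpa only [ge_iff_le, max_le_iff] using hs
  obtain ⟨A, hA, hcard⟩ :=
    exists_almostComplete_of_completeEquipartiteGraph_isContained (hs₁ s hs₁' R hdeg)
  obtain ⟨X, hX, hdisj, hb⟩ :=
    exists_isIndepSet_family hG hfree E (Fintype.card_fin _) hdeg hA hcard hMC
  refine colorable_of_isIndepSet_family hG hfree hdeg hX hdisj
    (le_card_add_of_pairwise_disjoint hdisj (Fintype.card_fin _) fun i ↦ hindep _ (hX i)) ?_
  lia

/-! ### Colorings of `K_m ⊔ K_{1,ℓ}` and Ramsey numbers -/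

section StarArrows

variable {G : SimpleGraph V} {H : SimpleGraph W} {m N ℓ : ℕ}

lemma KstarK_adj_some_some {i j : Fin m} : (KstarK m ℓ).Adj (some i) (some j) ↔ i ≠ j := by
  simp [KstarK]

lemma KstarK_adj_none_some {j : Fin m} : (KstarK m ℓ).Adj none (some j) ↔ (j : ℕ) < ℓ := by
  simp [KstarK]

lemma comap_some_KstarK_sdiff (R : SimpleGraph (Option (Fin m))) :
    (KstarK m ℓ \ R).comap some = (R.comap some)ᶜ := by
  ext i j
  simp only [comap_adj, sdiff_adj, KstarK_adj_some_some, compl_adj]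

lemma isContained_KstarK_sdiff {R : SimpleGraph (Option (Fin m))} (h : H ⊑ (R.comap some)ᶜ) :
    H ⊑ KstarK m ℓ \ R := by
  rw [← comap_some_KstarK_sdiff (ℓ := ℓ)] at h
  exact h.trans (Embedding.comap .some _).isContained

lemma arrows_mono (hNm : N ≤ m) (h : arrows N G H) : arrows m G H := by
  intro R
  simp only [arrows, containsCopy_iff_isContained] at h ⊢
  let e := Embedding.comap (Fin.castLEEmb hNm) R
  exact (h _).imp (·.trans e.isContained) (·.trans (Embedding.complEquiv e).isContained)

lemma starArrows_of_arrows (h : arrows m G H) : starArrows m ℓ G H := by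
  intro R _
  simp only [arrows, containsCopy_iff_isContained] at h ⊢
  exact (h (R.comap some)).imp (·.trans (Embedding.comap .some _).isContained)
    isContained_KstarK_sdiff

lemma arrows_succ_of_starArrows (h : starArrows m ℓ G H) : arrows (m + 1) G H := by
  intro R
  simp only [starArrows, containsCopy_iff_isContained] at h ⊢
  let e : Option (Fin m) ↪ Fin (m + 1) := (finSuccEquiv m).symm.toEmbedding
  have hred : R.comap e ⊓ KstarK m ℓ ≤ R.comap e := inf_le_left
  have hblue : KstarK m ℓ \ (R.comap e ⊓ KstarK m ℓ) ≤ Rᶜ.comap e := by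
    intro a b hab
    exact ⟨e.injective.ne hab.1.ne, fun hR ↦ hab.2 ⟨hR, hab.1⟩⟩
  exact (h _ inf_le_right).imp
    (fun hG ↦ (hG.mono_right hred).trans (Embedding.comap e R).isContained)
    (fun hH ↦ (hH.mono_right hblue).trans (Embedding.comap e Rᶜ).isContained)

lemma ramseyNumber_eq_succ (h : starArrows m ℓ G H) (hm : ¬arrows m G H) :
    ramseyNumber G H = m + 1 := by
  refine le_antisymm (Nat.sInf_le ⟨Nat.succ_pos m, arrows_succ_of_starArrows h⟩) ?_
  refine le_csInf ⟨m + 1, Nat.succ_pos m, arrows_succ_of_starArrows h⟩ fun N hN ↦ ?_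
  by_contra! hNm
  exact hm (arrows_mono (Nat.le_of_lt_succ hNm) hN.2)

lemma starRamsey_eq (h : starArrows m ℓ G H) (hℓ : 0 < ℓ)
    (hlt : ∀ ℓ' < ℓ, ¬starArrows m ℓ' G H) : starRamsey G H = ℓ := by
  have hm : ¬arrows m G H := fun harrows ↦ hlt 0 hℓ (starArrows_of_arrows harrows)
  rw [starRamsey, ramseyNumber_eq_succ h hm, Nat.add_sub_cancel]
  exact le_antisymm (Nat.sInf_le h) (le_csInf ⟨ℓ, h⟩ fun ℓ' hℓ' ↦ by_contra fun hlt' ↦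
    hlt ℓ' (not_le.mp hlt') hℓ')

end StarArrows

/-! ### The upper bound -/

section UpperBound

variable [Fintype V] {G : SimpleGraph V} {k n t s m ℓ C : ℕ}

lemma containsDisjointCliques_compl_of_free {R : SimpleGraph α} (hfree : G.Free R) (n t : ℕ)
    {S : Finset α} (hS : n * t + (Fintype.card V + t).choose (Fintype.card V) ≤ #S + t) :
    ContainsDisjointCliques Rᶜ n t S := by
  refine .of_forall_exists_isNClique (fun T _ hT ↦ ?_) hS
  obtain ⟨U, hUT, hU | hU⟩ := exists_isNClique_or_compl_isNClique R (Fintype.card V) t T hT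
  · have htop : (⊤ : SimpleGraph V) ⊑ R :=
      not_not.mp (cliqueFree_iff_top_free.not.mp hU.not_cliqueFree)
    exact absurd (htop.mono_left le_top) hfree
  · exact ⟨U, hUT, hU⟩

lemma card_nonNeighbors_le_of_free [Fintype α] {R : SimpleGraph α} (hfree : G.Free R)
    (hfan : (genFan n t).Free Rᶜ) (a : α) :
    #(nonNeighbors R univ a) ≤ n * t + (Fintype.card V + t).choose (Fintype.card V) := by
  classical
  by_contra! hlt
  have hcard : n * t + (Fintype.card V + t).choose (Fintype.card V) ≤
      #((nonNeighbors R univ a).erase a) :=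
    (Nat.le_sub_one_of_lt hlt).trans pred_card_le_card_erase
  refine hfan ((containsDisjointCliques_compl_of_free hfree n t (Nat.le_add_right_of_le hcard))
    |>.genFan_isContained (z := a) fun b hb ↦ ?_)
  obtain ⟨hba, hb⟩ := mem_erase.mp hb
  exact ⟨hba.symm, (mem_nonNeighbors.mp hb).2⟩

lemma card_le_of_isIndepSet {R : SimpleGraph α} (hfan : (genFan n t).Free Rᶜ) {X : Finset α}
    (hX : R.IsIndepSet X) : #X ≤ n * t :=
  not_lt.mp fun h ↦ hfan (genFan_isContained_of_isClique ((isClique_compl R).mpr hX) h)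

lemma exists_equipartition_of_colorable [Fintype α] {R : SimpleGraph α} (hR : R.Colorable k)
    (hα : Fintype.card α = k * s) (hdeg : ∀ a, #(nonNeighbors R univ a) ≤ s + C)
    (hindep : ∀ X : Finset α, R.IsIndepSet X → #X ≤ s) :
    ∃ X : Fin k → Finset α, (∀ i, R.IsIndepSet (X i)) ∧ Pairwise (Function.onFun Disjoint X) ∧
      (∀ i, #(X i) = s) ∧ AlmostComplete R X C := by
  classical
  obtain ⟨c⟩ := hR
  let X (i : Fin k) : Finset α := {a | c a = i}
  have hX (i) : R.IsIndepSet (X i) := fun a ha b hb _ hab ↦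
    c.valid hab (by grind)
  have hdisj : Pairwise (Function.onFun Disjoint X) := fun i j hij ↦
    disjoint_filter.mpr fun a _ hi hj ↦ hij (hi.symm.trans hj)
  have hcover : univ \ univ.biUnion X = ∅ := by
    ext a
    simp [X]
  have hcard (i) : #(X i) = s := by
    have := le_card_add_of_pairwise_disjoint hdisj hα (fun i ↦ hindep _ (hX i)) i
    rw [hcover, card_empty] at this
    exact (hindep _ (hX i)).antisymm this
  refine ⟨X, hX, hdisj, hcard, fun i j hij a ha ↦ ?_⟩
  have := card_nonNeighbors_add_le (R := R) (hdisj hij) (subset_univ _) (subset_univ _) a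
  have := hdeg a
  rw [nonNeighbors_eq_self fun b hb hab ↦ hX i ha hb hab.ne hab, hcard i] at *
  lia

lemma card_nonNeighbors_none_lt {R : SimpleGraph (Option (Fin m))}
    (hfan : (genFan n t).Free (KstarK m ℓ \ R)) {X : Finset (Fin m)}
    (hX : (R.comap some).IsIndepSet X) (hcard : n * t ≤ #X) (hn : 0 < n) (ht : 0 < t) :
    #(nonNeighbors R (X.map .some) none) < t + #{j ∈ X | ℓ ≤ j.val} := by
  classical
  have hclique : (KstarK m ℓ \ R).IsClique (X.map .some) := by
    rintro _ ha _ hb hab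
    obtain ⟨i, hi, rfl⟩ := mem_map.mp ha
    obtain ⟨j, hj, rfl⟩ := mem_map.mp hb
    have hij : i ≠ j := ne_of_apply_ne _ hab
    exact ⟨KstarK_adj_some_some.mpr hij, hX hi hj hij⟩
  have hblue : #{y ∈ X.map .some | (KstarK m ℓ \ R).Adj none y} < t := by
    by_contra! h
    have hnone : none ∉ X.map .some := by simp
    exact hfan (genFan_isContained_of_isClique_of_le_card_neighbors hclique
      (hcard.trans_eq (card_map _).symm) hnone hn ht h)
  have hsub : nonNeighbors R (X.map .some) none ⊆
      {y ∈ X.map .some | (KstarK m ℓ \ R).Adj none y} ∪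
        {j ∈ X | ℓ ≤ j.val}.map .some := by
    intro y hy
    obtain ⟨hyX, hyR⟩ := mem_nonNeighbors.mp hy
    obtain ⟨j, hj, rfl⟩ := mem_map.mp hyX
    rcases lt_or_ge (j : ℕ) ℓ with hjℓ | hjℓ
    · exact mem_union_left _ (mem_filter.mpr ⟨hyX, KstarK_adj_none_some.mpr hjℓ, hyR⟩)
    · exact mem_union_right _ (mem_map_of_mem _ (mem_filter.mpr ⟨hj, hjℓ⟩))
  have := (card_le_card hsub).trans (card_union_le _ _)
  rw [card_map] at this
  lia

lemma card_filter_le_fin : #{j : Fin m | ℓ ≤ j.val} = m - ℓ := by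
  have h := card_filter_add_card_filter_not (s := univ) (fun j : Fin m ↦ j.val < ℓ)
  simp only [Fin.card_filter_val_lt, card_univ, Fintype.card_fin, not_lt] at h
  lia

/- The new vertex has fewer than `t` blue neighbors in each class, a blue clique. Since only `m - ℓ`
vertices are not joined to it, it has red neighbors in every class. -/
lemma genFan_isContained_of_equipartition (hG : HasCriticalColoring G k) (hn : 0 < n)
    (ht : 0 < t) (hs : n * t ≤ s) (hℓ : m + t ≤ ℓ + s) {R : SimpleGraph (Option (Fin m))}
    (hfree : G.Free R) {X : Fin k → Finset (Fin m)}
    (hindep : ∀ i, (R.comap some).IsIndepSet (X i))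
    (hdisj : Pairwise (Function.onFun Disjoint X)) (hcard : ∀ i, #(X i) = s)
    (hX : AlmostComplete (R.comap some) X C)
    (hlarge : 2 * (Fintype.card V * (C + 1) + C) + t + 2 < s) : genFan n t ⊑ KstarK m ℓ \ R := by
  classical
  by_contra hfan
  let Z : Finset (Fin m) := {j | ℓ ≤ j.val}
  let z (i : Fin k) : Finset (Fin m) := {j ∈ X i | ℓ ≤ j.val}
  have hmiss (i) : #(nonNeighbors R ((X i).map .some) none) < t + #(z i) :=
    card_nonNeighbors_none_lt hfan (hindep i) (hs.trans (hcard i).ge) hn ht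
  have hZ : #Z + t ≤ s := by
    rw [card_filter_le_fin]
    lia
  have hz (i) : z i ⊆ Z := filter_subset_filter _ (subset_univ _)
  have hz_two (i j) (hij : i ≠ j) : #(z i) + #(z j) ≤ #Z := by
    rw [← card_union_of_disjoint ((hdisj hij).mono (filter_subset _ _) (filter_subset _ _))]
    exact card_le_card (union_subset (hz i) (hz j))
  obtain ⟨i, hi⟩ : ∃ i, ∀ a ∈ (X i).map .some, ¬R.Adj none a := by
    refine AlmostComplete.exists_forall_not_adj (X := fun i ↦ (X i).map .some)
      (AlmostComplete.map hX) hG hfree (fun i ↦ ?_) fun i j hij ↦ ?_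
    · rw [card_map, hcard]
      lia
    · have := hmiss i
      have := hmiss j
      have := hz_two i j hij
      simp only [card_map, hcard]
      lia
  have := hmiss i
  have := card_le_card (hz i)
  rw [nonNeighbors_eq_self hi, card_map, hcard] at *
  lia

end UpperBound

lemma exists_forall_starArrows_genFan [Finite V] {G : SimpleGraph V} {k t : ℕ}
    (hG : HasCriticalColoring G k) (ht : 0 < t) :
    ∃ n₀, ∀ n ≥ n₀, starArrows (k * (n * t)) ((k - 1) * (n * t) + t) G (genFan n t) := by
  have := Fintype.ofFinite V
  set C := (Fintype.card V + t).choose (Fintype.card V)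
  obtain ⟨s₀, hs₀⟩ := exists_colorable_of_free hG C
  refine ⟨max s₀ (2 * (Fintype.card V * (C + 1) + C) + t + 3), fun n hn R _ ↦ ?_⟩
  simp only [containsCopy_iff_isContained, or_iff_not_imp_left]
  intro hfree
  by_contra hfan
  obtain ⟨hn₁, hn₂⟩ := max_le_iff.mp hn
  have hnt : n ≤ n * t := Nat.le_mul_of_pos_right n ht
  have hfree' : G.Free (R.comap some) := fun h ↦
    hfree (h.trans (Embedding.comap .some R).isContained)
  have hfan' : (genFan n t).Free (R.comap some)ᶜ := fun h ↦ hfan (isContained_KstarK_sdiff h)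
  have hdeg := card_nonNeighbors_le_of_free hfree' hfan'
  have hindep (X : Finset (Fin (k * (n * t)))) (hX : (R.comap some).IsIndepSet X) :=
    card_le_of_isIndepSet hfan' hX
  obtain ⟨X, hX, hdisj, hcard, hXC⟩ := exists_equipartition_of_colorable
    (hs₀ _ (hn₁.trans hnt) _ hdeg hfree' hindep) (Fintype.card_fin _) hdeg hindep
  refine hfan (genFan_isContained_of_equipartition hG (by lia : 0 < n) ht le_rfl ?_ hfree hX
    hdisj hcard hXC (hn₂.trans hnt))
  have hk : (k - 1) * (n * t) + n * t = k * (n * t) := by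
    rw [← Nat.succ_mul, Nat.succ_eq_add_one, Nat.sub_add_cancel hG.pos]
  lia

/-! ### The lower bound -/

section LowerBound

variable {k s ℓ : ℕ}

/-- The color classes of the extremal coloring of `K_{ks} ⊔ K_{1,ℓ}`: `k` consecutive intervals
of length `s`, with the new vertex in the last one. -/
def intervalClass (hk : 0 < k) : Option (Fin (k * s)) → Fin k
  | none => ⟨k - 1, Nat.sub_one_lt_of_lt hk⟩
  | some j => j.divNat

/-- The red graph of the extremal coloring of `K_{ks} ⊔ K_{1,ℓ}`: the edges between different
classes. -/
def extremalRed (hk : 0 < k) (s ℓ : ℕ) : SimpleGraph (Option (Fin (k * s))) :=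
  KstarK (k * s) ℓ ⊓ SimpleGraph.comap (intervalClass hk) ⊤

lemma extremalRed_colorable (hk : 0 < k) : (extremalRed hk s ℓ).Colorable k :=
  ⟨intervalClass hk, fun {_ _} hab ↦ hab.2⟩

lemma KstarK_sdiff_extremalRed_adj {hk : 0 < k} {a b : Option (Fin (k * s))} :
    (KstarK (k * s) ℓ \ extremalRed hk s ℓ).Adj a b ↔
      (KstarK (k * s) ℓ).Adj a b ∧ intervalClass hk a = intervalClass hk b := by
  simp only [extremalRed, sdiff_adj, inf_adj, comap_adj, top_adj]
  tauto

lemma card_filter_divNat_le (i : Fin k) : #{j : Fin (k * s) | j.divNat = i} ≤ s := by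
  refine (card_le_card_of_injOn Fin.modNat (fun _ _ ↦ mem_univ _) ?_).trans_eq (card_fin s)
  intro j hj j' hj' hmod
  have hdiv : j.divNat = j'.divNat := (mem_filter.mp hj).2.trans (mem_filter.mp hj').2.symm
  exact finProdFinEquiv.symm.injective (Prod.ext hdiv hmod)

lemma degree_none_KstarK_sdiff_extremalRed_le (hk : 0 < k)
    [Fintype ((KstarK (k * s) ℓ \ extremalRed hk s ℓ).neighborSet none)] :
    (KstarK (k * s) ℓ \ extremalRed hk s ℓ).degree none ≤ ℓ - (k - 1) * s := by
  have hsub : (KstarK (k * s) ℓ \ extremalRed hk s ℓ).neighborFinset none ⊆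
      ({j | j.val ∈ Ico ((k - 1) * s) ℓ} : Finset (Fin (k * s))).map .some := by
    rintro (_ | j) hj
    · exact absurd (mem_neighborFinset _ _ _ |>.mp hj) (SimpleGraph.irrefl _)
    · obtain ⟨hadj, hclass⟩ := KstarK_sdiff_extremalRed_adj.mp (mem_neighborFinset _ _ _ |>.mp hj)
      have hdiv : k - 1 = j.val / s := congrArg Fin.val hclass
      refine mem_map_of_mem _ (mem_filter.mpr ⟨mem_univ j, mem_Ico.mpr ⟨?_, ?_⟩⟩)
      · rw [hdiv]
        exact Nat.div_mul_le_self j s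
      · exact KstarK_adj_none_some.mp hadj
  rw [← card_neighborFinset_eq_degree, ← Nat.card_Ico]
  refine (card_le_card hsub).trans ?_
  rw [card_map]
  exact card_le_card_of_injOn Fin.val (fun j hj ↦ (mem_filter.mp hj).2) Fin.val_injective.injOn

/- The center of a blue fan is adjacent to all of it, so a blue fan lies in a single class; having
minimum degree `t` it avoids the new vertex, and it has `n * t + 1` vertices. -/
lemma genFan_free_KstarK_sdiff_extremalRed {n t : ℕ} (hk : 0 < k) (hn : 0 < n)
    (hℓ : ℓ < (k - 1) * (n * t) + t) :
    (genFan n t).Free (KstarK (k * (n * t)) ℓ \ extremalRed hk (n * t) ℓ) := by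
  classical
  rintro ⟨f⟩
  have ht : 0 < t := Nat.pos_of_ne_zero (by rintro rfl; simp at hℓ)
  have hsome (p) : ∃ j, f p = some j := by
    refine Option.ne_none_iff_exists'.mp fun hp ↦ ?_
    have hdeg := (le_degree_genFan hn p).trans (f.degree_le p)
    rw [hp] at hdeg
    have := hdeg.trans (degree_none_KstarK_sdiff_extremalRed_le hk)
    lia
  choose g hg using hsome
  have hg_inj : Function.Injective g := fun p q hpq ↦
    f.injective ((hg p).trans ((congrArg some hpq).trans (hg q).symm))
  have hclass (p) : (g p).divNat = (g none).divNat := by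
    rcases p with _ | p
    · rfl
    · have := (KstarK_sdiff_extremalRed_adj.mp (f.toHom.map_adj (genFan_adj_none_some p))).2
      simp only [Copy.coe_toHom, hg] at this
      exact this.symm
  have hcard : n * t + 1 ≤ #{j : Fin (k * (n * t)) | j.divNat = (g none).divNat} := by
    have hsub : univ.map ⟨g, hg_inj⟩ ⊆
        ({j | j.divNat = (g none).divNat} : Finset (Fin (k * (n * t)))) := fun j hj ↦ by
      obtain ⟨p, -, rfl⟩ := mem_map.mp hj
      exact mem_filter.mpr ⟨mem_univ _, hclass p⟩
    simpa using card_le_card hsub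
  have := hcard.trans (card_filter_divNat_le _)
  lia

lemma not_starArrows_genFan {G : SimpleGraph V} {n t : ℕ} (hG : ¬G.Colorable k) (hk : 0 < k)
    (hn : 0 < n) (hℓ : ℓ < (k - 1) * (n * t) + t) :
    ¬starArrows (k * (n * t)) ℓ G (genFan n t) := by
  intro h
  simp only [starArrows, containsCopy_iff_isContained] at h
  exact (h _ inf_le_left).elim (free_of_colorable hG (extremalRed_colorable hk))
    (genFan_free_KstarK_sdiff_extremalRed hk hn hℓ)

end LowerBound

end Auxiliary

theorem statement_3_general (k t : ℕ) (ht : 1 ≤ t) {V : Type*} [Finite V]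
    (G : SimpleGraph V) (hchi : G.chromaticNumber = (k + 1 : ℕ)) (hcrit : EdgeCritical G) :
    ∃ n₀ : ℕ, ∀ n : ℕ, n₀ ≤ n → starRamsey G (genFan n t) = (k - 1) * n * t + t := by
  have hG : HasCriticalColoring G k := hcrit.hasCriticalColoring hchi
  obtain ⟨n₀, hupper⟩ := exists_forall_starArrows_genFan hG ht
  refine ⟨max n₀ 1, fun n hn ↦ ?_⟩
  obtain ⟨hn₀, hn_pos⟩ := max_le_iff.mp hn
  rw [mul_assoc]
  exact starRamsey_eq (hupper n hn₀) (Nat.add_pos_right _ ht) fun ℓ hℓ ↦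
    not_starArrows_genFan (not_colorable_of_chromaticNumber_eq hchi) hG.pos hn_pos hℓ

theorem statement_3 (k t : ℕ) (hk : 2 ≤ k) (ht : 2 ≤ t)
    {V : Type*} [Fintype V] (G : SimpleGraph V)
    (hchi : G.chromaticNumber = (k + 1 : ℕ)) (hcrit : EdgeCritical G) :
    ∃ n₀ : ℕ, ∀ n : ℕ, n₀ ≤ n →
      starRamsey G (genFan n t) = (k - 1) * n * t + t :=
  statement_3_general k t (Nat.one_le_of_lt ht) G hchi hcrit
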